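/- arXiv:2203.06560 — 8 statements merged into one kernel-verified Lean document; each statement's English description precedes it below -/
import Mathlib

section
/- Let D ≥ 2, let v ∈ ℝ^D with ‖v‖₂ = 1, and let λ ∈ [0,1]. Let ξ be uniformly distributed on the unit sphere of ℝ^D and define u = √λ·v + √(1−λ)·r, where r = (I − vv^⊤)ξ / ‖(I − vv^⊤)ξ‖₂ (well-defined almost surely, since (I − vv^⊤)ξ ≠ 0 almost surely). Then ‖u‖₂ = 1 almost surely and E[uu^⊤] = λ·vv^⊤ + ((1−λ)/(D−1))·(I − vv^⊤). -/
open MeasureTheory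
open scoped RealInnerProductSpace

/-- A random vector `ξ` is uniformly distributed on the unit sphere of `ℝⁿ` iff it is
measurable, takes values on the unit sphere almost surely, and its distribution is
invariant under every linear isometry (rotation/reflection) of `ℝⁿ`. -/
def IsUniformOnSphere {n : ℕ} {Ω : Type*} [MeasurableSpace Ω]
    (μ : Measure Ω) (ξ : Ω → EuclideanSpace ℝ (Fin n)) : Prop :=
  Measurable ξ ∧ (∀ᵐ ω ∂μ, ‖ξ ω‖ = 1) ∧
    ∀ T : EuclideanSpace ℝ (Fin n) ≃ₗᵢ[ℝ] EuclideanSpace ℝ (Fin n),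
      Measure.map (fun ω => T (ξ ω)) μ = Measure.map ξ μ

theorem aux_ae_ne {D : ℕ} (hD : 2 ≤ D) {Ω : Type*} [MeasureSpace Ω]
    [IsProbabilityMeasure (volume : Measure Ω)]
    (ξ : Ω → EuclideanSpace ℝ (Fin D)) (hξ : IsUniformOnSphere volume ξ)
    (v : EuclideanSpace ℝ (Fin D)) (hv : ‖v‖ = 1) :
    ∀ᵐ ω, ξ ω ≠ v := by
  obtain ⟨hm, h1, hT⟩ := hξ
  have hpm : IsProbabilityMeasure (Measure.map ξ volume) :=
    Measure.isProbabilityMeasure_map hm.aemeasurable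
  have hinf : (Metric.sphere (0 : EuclideanSpace ℝ (Fin D)) 1).Infinite := by
    apply (isPreconnected_sphere _ 0 1).infinite_of_nontrivial
    · refine ⟨v, by simp [hv], -v, by simp [hv], ?_⟩
      intro h
      have : v = 0 := by
        have h2 : (2 : ℝ) • v = 0 := by
          rw [two_smul]
          exact eq_neg_iff_add_eq_zero.mp h
        simpa using h2
      simp [this] at hv
    · rw [← Module.finrank_eq_rank]
      simp only [finrank_euclideanSpace, Fintype.card_fin]
      exact_mod_cast hD
  have hmass : ∀ w : EuclideanSpace ℝ (Fin D), ‖w‖ = 1 →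
      Measure.map ξ volume {w} = Measure.map ξ volume {v} := by
    intro w hw
    let T := Submodule.reflection (ℝ ∙ (w - v))ᗮ
    have hTw : T w = v := Submodule.reflection_sub (by rw [hw, hv])
    have hmT : Measurable (fun ω => T (ξ ω)) := T.continuous.measurable.comp hm
    conv_rhs => rw [← hT T]
    rw [Measure.map_apply hmT (by simp), Measure.map_apply hm (by simp)]
    congr 1
    ext ω
    simp only [Set.mem_preimage, Set.mem_singleton_iff]
    rw [← hTw]
    exact T.injective.eq_iff.symm
  have h0 : Measure.map ξ volume {v} = 0 := by
    by_contra hne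
    have := hinf.meas_eq_top (μ := Measure.map ξ volume)
      ⟨_, hne, fun x hx => (hmass x (by simpa using hx)).ge⟩
    exact measure_ne_top _ _ this
  rw [Measure.map_apply hm (by simp)] at h0
  exact measure_eq_zero_iff_ae_notMem.mp h0

/-- For a unit vector `v`, `λ ∈ [0,1]`, and `ξ` uniform on the unit sphere of
`ℝᴰ` (`D ≥ 2`), let `r` be the normalization of `(I − vvᵀ)ξ` (a.s. nonzero) and
`u = √λ·v + √(1−λ)·r`. Then `‖u‖ = 1` a.s. and
`E[uuᵀ] = λ·vvᵀ + ((1−λ)/(D−1))·(I − vvᵀ)`. -/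
theorem stmt4 {D : ℕ} (hD : 2 ≤ D) {Ω : Type*} [MeasureSpace Ω]
    [IsProbabilityMeasure (volume : Measure Ω)]
    (v : EuclideanSpace ℝ (Fin D)) (hv : ‖v‖ = 1)
    (lam : ℝ) (hlam : lam ∈ Set.Icc (0 : ℝ) 1)
    (ξ : Ω → EuclideanSpace ℝ (Fin D)) (hξ : IsUniformOnSphere volume ξ)
    (r : Ω → EuclideanSpace ℝ (Fin D))
    (hr : ∀ ω, r ω = ‖ξ ω - (⟪v, ξ ω⟫ : ℝ) • v‖⁻¹ • (ξ ω - (⟪v, ξ ω⟫ : ℝ) • v))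
    (u : Ω → EuclideanSpace ℝ (Fin D))
    (hu : ∀ ω, u ω = Real.sqrt lam • v + Real.sqrt (1 - lam) • r ω) :
    (∀ᵐ ω, ξ ω - (⟪v, ξ ω⟫ : ℝ) • v ≠ 0) ∧
    (∀ᵐ ω, ‖u ω‖ = 1) ∧
    ∀ j k, (∫ ω, u ω j * u ω k)
      = lam * (v j * v k)
        + (1 - lam) / ((D : ℝ) - 1) * ((if j = k then (1 : ℝ) else 0) - v j * v k) := by
  have hne : ∀ᵐ ω, ξ ω - (⟪v, ξ ω⟫ : ℝ) • v ≠ 0 := by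
    filter_upwards [hξ.2.1, aux_ae_ne hD ξ hξ v hv, aux_ae_ne hD ξ hξ (-v) (by simpa using hv)]
      with ω h1 h2 h3 h
    rw [sub_eq_zero] at h
    have hc : |(⟪v, ξ ω⟫ : ℝ)| = 1 := by
      have := congrArg norm h
      rw [norm_smul, h1, hv, mul_one, Real.norm_eq_abs] at this
      exact this.symm
    rcases (abs_eq zero_le_one).mp hc with h4 | h4
    · rw [h4, one_smul] at h
      exact h2 h
    · rw [h4, neg_one_smul] at h
      exact h3 h
  have hvv : (⟪v, v⟫ : ℝ) = 1 := by rw [real_inner_self_eq_norm_sq, hv]; norm_num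
  have hvr : ∀ ω, (⟪v, r ω⟫ : ℝ) = 0 := by
    intro ω
    rw [hr, inner_smul_right, inner_sub_right, inner_smul_right, hvv]
    ring
  have hr1 : ∀ᵐ ω, ‖r ω‖ = 1 := by
    filter_upwards [hne] with ω h
    rw [hr, norm_smul, norm_inv, norm_norm]
    exact inv_mul_cancel₀ (norm_ne_zero_iff.mpr h)
  have hl0 : Real.sqrt lam ^ 2 = lam := Real.sq_sqrt hlam.1
  have hl1 : Real.sqrt (1 - lam) ^ 2 = 1 - lam := Real.sq_sqrt (by linarith [hlam.2])
  refine ⟨hne, ?_, ?_⟩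
  · filter_upwards [hr1] with ω h
    have : ‖u ω‖ ^ 2 = 1 := by
      rw [hu, norm_add_sq_real, norm_smul, norm_smul, inner_smul_left, inner_smul_right, hvr, hv, h,
        Real.norm_eq_abs, Real.norm_eq_abs, mul_one, mul_one, sq_abs, sq_abs, hl0, hl1]
      simp
    nlinarith [norm_nonneg (u ω)]
  -- the normalized projection as a function on the space
  let g : EuclideanSpace ℝ (Fin D) → EuclideanSpace ℝ (Fin D) :=
    fun x => ‖x - (⟪v, x⟫ : ℝ) • v‖⁻¹ • (x - (⟪v, x⟫ : ℝ) • v)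
  have hgm : Measurable g := by
    have h : Measurable (fun x : EuclideanSpace ℝ (Fin D) => x - (⟪v, x⟫ : ℝ) • v) :=
      Continuous.measurable (by fun_prop)
    exact h.norm.inv.smul h
  have hrg : ∀ ω, r ω = g (ξ ω) := hr
  have hrm : Measurable r := by
    rw [show r = fun ω => g (ξ ω) from funext hrg]
    exact hgm.comp hξ.1
  -- invariance
  have hinv : ∀ T : EuclideanSpace ℝ (Fin D) ≃ₗᵢ[ℝ] EuclideanSpace ℝ (Fin D), T v = v →
      ∀ f : EuclideanSpace ℝ (Fin D) → ℝ, Continuous f →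
      ∫ ω, f (T (r ω)) = ∫ ω, f (r ω) := by
    intro T hTv f hf
    have hTm : Measurable (fun ω => T (ξ ω)) := T.continuous.measurable.comp hξ.1
    have hfg : Measurable (fun x => f (g x)) := hf.measurable.comp hgm
    have hgT : ∀ x, T (g x) = g (T x) := by
      intro x
      have h1 : (⟪v, T x⟫ : ℝ) = ⟪v, x⟫ := by
        conv_lhs => rw [← hTv]
        exact T.inner_map_map v x
      have h2 : T x - (⟪v, x⟫ : ℝ) • v = T (x - (⟪v, x⟫ : ℝ) • v) := by
        rw [map_sub, map_smul, hTv]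
      simp only [g]
      rw [h1, h2, T.norm_map, map_smul]
    have e1 : ∫ ω, f (T (r ω)) = ∫ x, f (g x) ∂(Measure.map (fun ω => T (ξ ω)) volume) := by
      rw [integral_map hTm.aemeasurable hfg.aestronglyMeasurable]
      simp only [hrg, hgT]
    have e2 : ∫ ω, f (r ω) = ∫ x, f (g x) ∂(Measure.map ξ volume) := by
      rw [integral_map hξ.1.aemeasurable hfg.aestronglyMeasurable]
      simp only [hrg]
    rw [e1, e2, hξ.2.2 T]
  -- integrability
  have hin : ∀ x, ∀ᵐ ω, ‖(⟪x, r ω⟫ : ℝ)‖ ≤ ‖x‖ := by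
    intro x
    filter_upwards [hr1] with ω h
    have := norm_inner_le_norm (𝕜 := ℝ) x (r ω)
    rwa [h, mul_one] at this
  have him : ∀ x, Measurable (fun ω => (⟪x, r ω⟫ : ℝ)) := fun x =>
    (Continuous.measurable (by fun_prop : Continuous fun y => (⟪x, y⟫ : ℝ))).comp hrm
  have hi1 : ∀ x, Integrable (fun ω => (⟪x, r ω⟫ : ℝ)) := fun x =>
    Integrable.of_bound (him x).aestronglyMeasurable ‖x‖ (hin x)
  have hi2 : ∀ x, Integrable (fun ω => (⟪x, r ω⟫ : ℝ) ^ 2) := fun x => by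
    refine Integrable.of_bound ((him x).pow_const 2).aestronglyMeasurable (‖x‖ ^ 2) ?_
    filter_upwards [hin x] with ω h
    rw [norm_pow]
    gcongr
  -- first moment
  have hmean : ∀ x, ∫ ω, (⟪x, r ω⟫ : ℝ) = 0 := by
    intro x
    have h := hinv (Submodule.reflection (ℝ ∙ v))
      (Submodule.reflection_mem_subspace_eq_self (Submodule.mem_span_singleton_self v))
      (fun y => ⟪x, y⟫) (by fun_prop)
    have h2 : ∀ ω, (Submodule.reflection (ℝ ∙ v)) (r ω) = - r ω := fun ω =>
      Submodule.reflection_mem_subspace_orthogonalComplement_eq_neg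
        (Submodule.mem_orthogonal_singleton_iff_inner_right.mpr (hvr ω))
    simp only [h2, inner_neg_right, integral_neg] at h
    linarith
  -- second moments
  obtain ⟨ω₀, hω₀⟩ := hr1.exists
  let c : ℝ := ∫ ω, (⟪r ω₀, r ω⟫ : ℝ) ^ 2
  have hperp : ∀ x, (⟪v, x⟫ : ℝ) = 0 → ∫ ω, (⟪x, r ω⟫ : ℝ) ^ 2 = ‖x‖ ^ 2 * c := by
    intro x hx
    have hn : ‖x‖ = ‖(‖x‖ • r ω₀)‖ := by rw [norm_smul, hω₀]; simp
    let T := Submodule.reflection (ℝ ∙ (x - ‖x‖ • r ω₀))ᗮ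
    have hTx : T x = ‖x‖ • r ω₀ := Submodule.reflection_sub hn
    have hTv : T v = v := by
      apply Submodule.reflection_mem_subspace_eq_self
      rw [Submodule.mem_orthogonal_singleton_iff_inner_left, inner_sub_right, inner_smul_right,
        hvr, hx]
      simp
    have h := hinv T hTv (fun y => (⟪T x, y⟫ : ℝ) ^ 2) (by fun_prop)
    simp only [T.inner_map_map] at h
    rw [h, hTx]
    simp only [inner_smul_left, mul_pow, integral_const_mul, c]
    simp
  have hQ : ∀ x, ∫ ω, (⟪x, r ω⟫ : ℝ) ^ 2 = (‖x‖ ^ 2 - (⟪v, x⟫ : ℝ) ^ 2) * c := by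
    intro x
    have h := hperp (x - (⟪v, x⟫ : ℝ) • v) (by
      rw [inner_sub_right, inner_smul_right, hvv]; ring)
    have h2 : ‖x - (⟪v, x⟫ : ℝ) • v‖ ^ 2 = ‖x‖ ^ 2 - (⟪v, x⟫ : ℝ) ^ 2 := by
      rw [norm_sub_sq_real, norm_smul, inner_smul_right, hv, mul_one, Real.norm_eq_abs, sq_abs,
        real_inner_comm v x]
      ring
    rw [h2] at h
    rw [← h]
    simp only [inner_sub_left, inner_smul_left, hvr, mul_zero, sub_zero]
  let e : Fin D → EuclideanSpace ℝ (Fin D) := fun j => EuclideanSpace.single j 1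
  have he : ∀ j (x : EuclideanSpace ℝ (Fin D)), (⟪e j, x⟫ : ℝ) = x j := by
    intro j x
    simp [e, EuclideanSpace.inner_single_left]
  have he' : ∀ j (x : EuclideanSpace ℝ (Fin D)), (⟪x, e j⟫ : ℝ) = x j := by
    intro j x
    rw [real_inner_comm, he]
  have hen : ∀ j, ‖e j‖ = 1 := by intro j; simp [e]
  have hc : ((D : ℝ) - 1) * c = 1 := by
    have h1 : ∫ ω, ∑ j, (⟪e j, r ω⟫ : ℝ) ^ 2 = 1 := by
      have : (fun ω => ∑ j, (⟪e j, r ω⟫ : ℝ) ^ 2) =ᵐ[volume] fun _ => (1 : ℝ) := by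
        filter_upwards [hr1] with ω h
        simp only [he]
        rw [← EuclideanSpace.real_norm_sq_eq, h]
        norm_num
      rw [integral_congr_ae this]
      simp
    rw [integral_finsetSum _ (fun j _ => hi2 (e j))] at h1
    simp only [hQ, he', hen] at h1
    rw [← Finset.sum_mul, Finset.sum_sub_distrib, ← EuclideanSpace.real_norm_sq_eq, hv] at h1
    simpa using h1
  have hD1 : (D : ℝ) - 1 ≠ 0 := by
    have : (2 : ℝ) ≤ D := by exact_mod_cast hD
    linarith
  have hc' : c = 1 / ((D : ℝ) - 1) := by
    field_simp
    linarith
  intro j k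
  have hee : (⟪e j, e k⟫ : ℝ) = if j = k then (1 : ℝ) else 0 := by
    rw [he]
    simp [e]
  have hpt : ∀ ω, u ω j * u ω k = (lam * (v j * v k)
      + Real.sqrt lam * Real.sqrt (1 - lam) * v j * (⟪e k, r ω⟫ : ℝ)
      + Real.sqrt lam * Real.sqrt (1 - lam) * v k * (⟪e j, r ω⟫ : ℝ))
      + (1 - lam) / 2 * ((⟪e j + e k, r ω⟫ : ℝ) ^ 2 - (⟪e j, r ω⟫ : ℝ) ^ 2
        - (⟪e k, r ω⟫ : ℝ) ^ 2) := by
    intro ω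
    rw [hu]
    simp only [inner_add_left, he, PiLp.add_apply, PiLp.smul_apply, smul_eq_mul]
    linear_combination (v j * v k) * hl0 + (r ω j * r ω k) * hl1
  simp only [hpt]
  rw [integral_add, integral_add, integral_add, integral_const, integral_const_mul, integral_const_mul,
    integral_const_mul, integral_sub, integral_sub, hmean, hmean, hQ, hQ, hQ]
  · rw [norm_add_sq_real, inner_add_right, hee, he' j v, he' k v, hen, hen, hc']
    simp only [probReal_univ, smul_eq_mul]
    ring
  · exact hi2 _
  · exact hi2 _
  · exact (hi2 _).sub (hi2 _)
  · exact hi2 _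
  · exact integrable_const _
  · exact (hi1 _).const_mul _
  · exact (integrable_const _).add ((hi1 _).const_mul _)
  · exact (hi1 _).const_mul _
  · exact ((integrable_const _).add ((hi1 _).const_mul _)).add ((hi1 _).const_mul _)
  · exact (((hi2 _).sub (hi2 _)).sub (hi2 _)).const_mul _
end

section
/- (Optimal λ, Eq. (12)) Fix integers D ≥ 2 and q ≥ 1 and a real α with 0 < α² < 1. Define F : [0,1] → ℝ by F(λ) = (λα² + ((1−λ)/(D−1))(1−α²))² / ((1 − 1/q)(λ²α² + ((1−λ)/(D−1))²(1−α²)) + (1/q)(λα² + ((1−λ)/(D−1))(1−α²))), whose denominator is positive on [0,1]. Define λ* = 0 if α² ≤ 1/(D+2q−2); λ* = (1−α²)(α²(D+2q−2) − 1) / (2α²Dq − α⁴D(D+2q−2) − 1) if 1/(D+2q−2) < α² < (2q−1)/(D+2q−2); and λ* = 1 if α² ≥ (2q−1)/(D+2q−2). Then λ* ∈ [0,1] and F(λ*) ≥ F(λ) for every λ ∈ [0,1]. -/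
/-- Positivity of the denominator. -/
lemma den_pos (a b n Q x y : ℝ) (ha : 0 < a) (hb : 0 < b) (hn : 0 < n) (hQ : 1 ≤ Q)
    (hx : 0 ≤ x) (hy : 0 ≤ y) (hxy : x + n * y = 1) :
    0 < (1 - 1 / Q) * (x ^ 2 * a + y ^ 2 * b) + (1 / Q) * (x * a + y * b) := by
  have hQ0 : 0 < Q := by linarith
  have h1 : 0 ≤ 1 - 1 / Q := by
    rw [sub_nonneg, div_le_one hQ0]; exact hQ
  have h2 : 0 < x * a + y * b := by
    rcases hx.eq_or_lt with h | h
    · subst h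
      have : 0 < y := by
        rcases hy.eq_or_lt with h | h
        · subst h; simp at hxy
        · exact h
      positivity
    · positivity
  positivity

/-- The comparison via an explicit factorization. -/
lemma core_le (a b n Q x y u v : ℝ) (ha : 0 < a) (hb : 0 < b) (hab : a + b = 1) (hn : 0 < n)
    (hQ : 1 ≤ Q) (hx : 0 ≤ x) (hy : 0 ≤ y) (hxy : x + n * y = 1)
    (hu : 0 ≤ u) (hv : 0 ≤ v) (huv : u + n * v = 1)
    (hK : 0 ≤ (x * v - y * u) *
      (2 * (Q - 1) * a * b * (u - v) + (b - n * a) * (u * a + v * b))) :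
    (x * a + y * b) ^ 2 / ((1 - 1 / Q) * (x ^ 2 * a + y ^ 2 * b) + (1 / Q) * (x * a + y * b)) ≤
    (u * a + v * b) ^ 2 / ((1 - 1 / Q) * (u ^ 2 * a + v ^ 2 * b) + (1 / Q) * (u * a + v * b)) := by
  have hQ0 : 0 < Q := by linarith
  rw [div_le_div_iff₀ (den_pos a b n Q x y ha hb hn hQ hx hy hxy)
    (den_pos a b n Q u v ha hb hn hQ hu hv huv), ← sub_nonneg]
  have e1 : ∀ s t : ℝ, s + n * t = 1 →
      (1 - 1 / Q) * (s ^ 2 * a + t ^ 2 * b) + (1 / Q) * (s * a + t * b) =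
      (1 / Q) * ((Q - 1) * (s ^ 2 * a + t ^ 2 * b) + (s * a + t * b) * (s + n * t)) := by
    intro s t h
    rw [h]; field_simp
  rw [e1 x y hxy, e1 u v huv]
  have hb' : b = 1 - a := by linarith
  have key : (u * a + v * b) ^ 2 * (1 / Q * ((Q - 1) * (x ^ 2 * a + y ^ 2 * b)
        + (x * a + y * b) * (x + n * y))) -
      (x * a + y * b) ^ 2 * (1 / Q * ((Q - 1) * (u ^ 2 * a + v ^ 2 * b)
        + (u * a + v * b) * (u + n * v))) =
      1 / Q * ((Q - 1) * a * b * (x * v - y * u) ^ 2 + (x * a + y * b) * ((x * v - y * u) *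
      (2 * (Q - 1) * a * b * (u - v) + (b - n * a) * (u * a + v * b)))) := by
    subst hb'; ring
  rw [key]
  have : 0 ≤ Q - 1 := by linarith
  have : 0 ≤ x * a + y * b := by positivity
  positivity



/-- Optimal λ, Eq. (12): For `D ≥ 2`, `q ≥ 1` and `0 < α² < 1`, the function
`F(λ)` (the PRGF-BS gain, whose denominator is positive on `[0,1]`) is maximized over
`[0,1]` at the piecewise value `λ*` of Eq. (12), and `λ* ∈ [0,1]`. -/
theorem stmt6 (D q : ℕ) (hD : 2 ≤ D) (hq : 1 ≤ q) (α : ℝ)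
    (hα0 : 0 < α ^ 2) (hα1 : α ^ 2 < 1)
    (F : ℝ → ℝ)
    (hF : ∀ l : ℝ, F l =
      (l * α ^ 2 + (1 - l) / ((D : ℝ) - 1) * (1 - α ^ 2)) ^ 2 /
        ((1 - 1 / (q : ℝ)) * (l ^ 2 * α ^ 2 + ((1 - l) / ((D : ℝ) - 1)) ^ 2 * (1 - α ^ 2))
          + (1 / (q : ℝ)) * (l * α ^ 2 + (1 - l) / ((D : ℝ) - 1) * (1 - α ^ 2))))
    (lstar : ℝ)
    (hls : lstar =
      if α ^ 2 ≤ 1 / ((D : ℝ) + 2 * q - 2) then 0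
      else if α ^ 2 < (2 * (q : ℝ) - 1) / ((D : ℝ) + 2 * q - 2) then
        (1 - α ^ 2) * (α ^ 2 * ((D : ℝ) + 2 * q - 2) - 1) /
          (2 * α ^ 2 * (D : ℝ) * (q : ℝ) - α ^ 4 * (D : ℝ) * ((D : ℝ) + 2 * q - 2) - 1)
      else 1) :
    (∀ l ∈ Set.Icc (0 : ℝ) 1,
      0 < (1 - 1 / (q : ℝ)) * (l ^ 2 * α ^ 2 + ((1 - l) / ((D : ℝ) - 1)) ^ 2 * (1 - α ^ 2))
          + (1 / (q : ℝ)) * (l * α ^ 2 + (1 - l) / ((D : ℝ) - 1) * (1 - α ^ 2))) ∧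
    lstar ∈ Set.Icc (0 : ℝ) 1 ∧
    ∀ l ∈ Set.Icc (0 : ℝ) 1, F l ≤ F lstar := by
  have hD' : (2 : ℝ) ≤ D := by exact_mod_cast hD
  have hQ : (1 : ℝ) ≤ q := by exact_mod_cast hq
  have h4 : α ^ 4 = (α ^ 2) ^ 2 := by ring
  rw [h4] at hls
  generalize α ^ 2 = a at *
  generalize (q : ℝ) = Q at *
  obtain ⟨n, hn⟩ : ∃ n : ℝ, n = (D : ℝ) - 1 := ⟨_, rfl⟩
  have hDn : (D : ℝ) = n + 1 := by linarith
  rw [← hn] at hF ⊢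
  rw [hDn] at hls
  have hn0 : 0 < n := by linarith
  have hb : 0 < 1 - a := by linarith
  have hy : ∀ l : ℝ, l + n * ((1 - l) / n) = 1 := by intro l; field_simp; ring
  have hy0 : ∀ l : ℝ, l ≤ 1 → 0 ≤ (1 - l) / n := fun l h => div_nonneg (by linarith) hn0.le
  refine ⟨fun l hl => den_pos a (1 - a) n Q l _ hα0 hb hn0 hQ hl.1 (hy0 l hl.2) (hy l), ?_⟩
  have hE : 0 < n + 1 + 2 * Q - 2 := by linarith
  suffices H : lstar ∈ Set.Icc (0 : ℝ) 1 ∧ ∀ l ∈ Set.Icc (0 : ℝ) 1,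
      0 ≤ (l - lstar) / n * (2 * (Q - 1) * a * (1 - a) * (lstar - (1 - lstar) / n)
        + ((1 - a) - n * a) * (lstar * a + (1 - lstar) / n * (1 - a))) by
    refine ⟨H.1, fun l hl => ?_⟩
    rw [hF, hF]
    refine core_le a (1 - a) n Q l _ lstar _ hα0 hb (by ring) hn0 hQ hl.1 (hy0 l hl.2) (hy l)
      H.1.1 (hy0 _ H.1.2) (hy _) ?_
    have e : l * ((1 - lstar) / n) - (1 - l) / n * lstar = (l - lstar) / n := by ring
    rw [e]
    exact H.2 l hl
  split_ifs at hls with c1 c2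
  · rw [le_div_iff₀ hE] at c1
    subst hls
    refine ⟨by simp, fun l hl => ?_⟩
    have e : (l - 0) / n * (2 * (Q - 1) * a * (1 - a) * (0 - (1 - 0) / n)
        + ((1 - a) - n * a) * (0 * a + (1 - 0) / n * (1 - a))) =
        l / n * ((1 - a) / n * (1 - a * (n + 1 + 2 * Q - 2))) := by ring
    rw [e]
    have := hl.1
    have : 0 ≤ 1 - a * (n + 1 + 2 * Q - 2) := by linarith
    positivity
  · rw [not_le, div_lt_iff₀ hE] at c1
    rw [lt_div_iff₀ hE] at c2
    have eS : 2 * a * (n + 1) * Q - a ^ 2 * (n + 1) * (n + 1 + 2 * Q - 2) - 1 =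
      (1 - a) * (a * (n + 1 + 2 * Q - 2) - 1)
        + n * (a * (2 * Q - 1 - a * (n + 1 + 2 * Q - 2))) := by ring
    rw [eS] at hls
    obtain ⟨A, hA⟩ : ∃ A, A = a * (n + 1 + 2 * Q - 2) - 1 := ⟨_, rfl⟩
    obtain ⟨B, hB⟩ : ∃ B, B = 2 * Q - 1 - a * (n + 1 + 2 * Q - 2) := ⟨_, rfl⟩
    rw [← hA, ← hB] at hls
    have hA0 : 0 < A := by linarith
    have hB0 : 0 < B := by linarith
    have hS : 0 < (1 - a) * A + n * (a * B) := by positivity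
    have hv : (1 - lstar) / n = a * B / ((1 - a) * A + n * (a * B)) := by
      rw [hls]; field_simp; ring
    refine ⟨⟨by rw [hls]; positivity, ?_⟩, fun l hl => ?_⟩
    · rw [hls, div_le_one hS]
      have : 0 < n * (a * B) := by positivity
      linarith
    · have e : 2 * (Q - 1) * a * (1 - a) * (lstar - (1 - lstar) / n)
        + ((1 - a) - n * a) * (lstar * a + (1 - lstar) / n * (1 - a)) =
        a * lstar * B - (1 - a) * ((1 - lstar) / n) * A := by
        rw [hA, hB]; ring
      have e0 : a * lstar * B - (1 - a) * ((1 - lstar) / n) * A = 0 := by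
        rw [hv, hls]; ring
      rw [e, e0, mul_zero]
  · rw [not_lt, div_le_iff₀ hE] at c2
    subst hls
    refine ⟨by simp, fun l hl => ?_⟩
    have e : (l - 1) / n * (2 * (Q - 1) * a * (1 - a) * (1 - (1 - 1) / n)
        + ((1 - a) - n * a) * (1 * a + (1 - 1) / n * (1 - a))) =
        (1 - l) / n * (a * (a * (n + 1 + 2 * Q - 2) - (2 * Q - 1))) := by ring
    rw [e]
    have := hy0 l hl.2
    have : 0 ≤ a * (n + 1 + 2 * Q - 2) - (2 * Q - 1) := by linarith
    positivity
end

section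
/- Fix integers D ≥ 2 and q ≥ 1 and a real α with 0 < α² < 1. Let λ₁ = (1−α²)(α²(D+2q−2) − 1) / (2α²Dq − α⁴D(D+2q−2) − 1), defined whenever the denominator is nonzero. If 1/(D+2q−2) < α² < (2q−1)/(D+2q−2), then the denominator 2α²Dq − α⁴D(D+2q−2) − 1 is positive and λ₁ ∈ (0,1). Conversely, if the denominator is nonzero and λ₁ ∈ (0,1), then 1/(D+2q−2) < α² < (2q−1)/(D+2q−2). -/
/-- For `D ≥ 2`, `q ≥ 1`, `0 < α² < 1`, and the interior stationary point
`λ₁ = (1−α²)(α²(D+2q−2)−1) / (2α²Dq − α⁴D(D+2q−2) − 1)`: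
if `1/(D+2q−2) < α² < (2q−1)/(D+2q−2)` then the denominator is positive and `λ₁ ∈ (0,1)`;
conversely, if the denominator is nonzero and `λ₁ ∈ (0,1)`, then
`1/(D+2q−2) < α² < (2q−1)/(D+2q−2)`. -/
theorem stmt7 (D q : ℕ) (hD : 2 ≤ D) (hq : 1 ≤ q) (α : ℝ)
    (hα0 : 0 < α ^ 2) (hα1 : α ^ 2 < 1) :
    ((1 / ((D : ℝ) + 2 * q - 2) < α ^ 2 ∧
        α ^ 2 < (2 * (q : ℝ) - 1) / ((D : ℝ) + 2 * q - 2)) →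
      0 < 2 * α ^ 2 * (D : ℝ) * (q : ℝ) - α ^ 4 * (D : ℝ) * ((D : ℝ) + 2 * q - 2) - 1 ∧
      (1 - α ^ 2) * (α ^ 2 * ((D : ℝ) + 2 * q - 2) - 1) /
          (2 * α ^ 2 * (D : ℝ) * (q : ℝ) - α ^ 4 * (D : ℝ) * ((D : ℝ) + 2 * q - 2) - 1)
        ∈ Set.Ioo (0 : ℝ) 1) ∧
    ((2 * α ^ 2 * (D : ℝ) * (q : ℝ) - α ^ 4 * (D : ℝ) * ((D : ℝ) + 2 * q - 2) - 1 ≠ 0 ∧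
        (1 - α ^ 2) * (α ^ 2 * ((D : ℝ) + 2 * q - 2) - 1) /
            (2 * α ^ 2 * (D : ℝ) * (q : ℝ) - α ^ 4 * (D : ℝ) * ((D : ℝ) + 2 * q - 2) - 1)
          ∈ Set.Ioo (0 : ℝ) 1) →
      1 / ((D : ℝ) + 2 * q - 2) < α ^ 2 ∧
        α ^ 2 < (2 * (q : ℝ) - 1) / ((D : ℝ) + 2 * q - 2)) := by
  have hD' : (2 : ℝ) ≤ D := by exact_mod_cast hD
  have hq' : (1 : ℝ) ≤ q := by exact_mod_cast hq
  have hS : (0 : ℝ) < (D : ℝ) + 2 * q - 2 := by linarith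
  have key : 2 * α ^ 2 * (D : ℝ) * (q : ℝ) - α ^ 4 * (D : ℝ) * ((D : ℝ) + 2 * q - 2) - 1
      = (1 - α ^ 2) * (α ^ 2 * ((D : ℝ) + 2 * q - 2) - 1)
        + α ^ 2 * ((D : ℝ) - 1) * (2 * q - 1 - α ^ 2 * ((D : ℝ) + 2 * q - 2)) := by ring
  rw [key, div_lt_iff₀ hS, lt_div_iff₀ hS]
  have hc : 0 < α ^ 2 * ((D : ℝ) - 1) := mul_pos hα0 (by linarith)
  have ha : 0 < 1 - α ^ 2 := by linarith
  clear key
  generalize α ^ 2 * ((D : ℝ) - 1) = c at *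
  generalize α ^ 2 * ((D : ℝ) + 2 * q - 2) = t at *
  generalize 1 - α ^ 2 = b at *
  constructor
  · rintro ⟨h1, h2⟩
    have p1 : 0 < b * (t - 1) := mul_pos ha (by linarith)
    have p2 : 0 < c * (2 * q - 1 - t) := mul_pos hc (by linarith)
    refine ⟨by linarith, div_pos p1 (by linarith), ?_⟩
    rw [div_lt_one (by linarith)]
    linarith
  · rintro ⟨h0, h1, h2⟩
    rcases lt_or_gt_of_ne h0 with h | h
    · rw [div_lt_one_of_neg h] at h2
      have n1 : b * (t - 1) < 0 := by
        by_contra hn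
        exact absurd h1 (not_lt.mpr (div_nonpos_of_nonneg_of_nonpos (not_lt.mp hn) h.le))
      have n2 : c * (2 * q - 1 - t) < 0 := by linarith
      have := (pos_iff_neg_of_mul_neg n1).mp ha
      have := (pos_iff_neg_of_mul_neg n2).mp hc
      linarith
    · rw [div_lt_one h] at h2
      have n1 : 0 < b * (t - 1) := (div_pos_iff_of_pos_right h).mp h1
      have n2 : 0 < c * (2 * q - 1 - t) := by linarith
      have := (mul_pos_iff_of_pos_left ha).mp n1
      have := (mul_pos_iff_of_pos_left hc).mp n2
      constructor <;> linarith
end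

section
/- Fix integers D ≥ 2 and q ≥ 1, and define λ* : [0,1] → [0,1] by λ*(t) = 0 if t ≤ 1/(D+2q−2); λ*(t) = (1−t)(t(D+2q−2) − 1) / (2tDq − t²D(D+2q−2) − 1) if 1/(D+2q−2) < t < (2q−1)/(D+2q−2); and λ*(t) = 1 if t ≥ (2q−1)/(D+2q−2). Then λ* is monotonically non-decreasing on [0,1], and strictly increasing on the interval (1/(D+2q−2), (2q−1)/(D+2q−2)). -/
theorem aux_den {E m w : ℝ} (hE : 0 < E) (h0 : 0 < w) (h1 : w < m) :
    0 < (E + 1) * (w * (m - w)) + E * m := by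
  have : 0 < m - w := by linarith
  have : 0 < m := by linarith
  positivity

theorem aux_lt {E m a b : ℝ} (hE : 0 < E) (ha : 0 < a) (hab : a < b) (hb : b < m) :
    (E + m - a) * a / ((E + 1) * (a * (m - a)) + E * m) <
      (E + m - b) * b / ((E + 1) * (b * (m - b)) + E * m) := by
  rw [div_lt_div_iff₀ (aux_den hE ha (hab.trans hb)) (aux_den hE (ha.trans hab) hb)]
  have h1 : 0 < m - a := by linarith
  have h2 : 0 < m - b := by linarith
  have h3 : 0 < b - a := by linarith
  have h4 : 0 < b := by linarith
  have h5 : 0 < m := by linarith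
  have : 0 < (b - a) * (E * ((m - a) * (m - b) + E * (m + a * b))) := by positivity
  nlinarith [this]

/-- For `D ≥ 2` and `q ≥ 1`, the function `λ* : [0,1] → [0,1]` of Eq. (12)
(as a function of `t = α²`) is monotonically non-decreasing on `[0,1]` and strictly
increasing on `(1/(D+2q−2), (2q−1)/(D+2q−2))`. -/
theorem stmt8 (D q : ℕ) (hD : 2 ≤ D) (hq : 1 ≤ q)
    (lstar : ℝ → ℝ)
    (h : ∀ t : ℝ, lstar t =
      if t ≤ 1 / ((D : ℝ) + 2 * q - 2) then 0
      else if t < (2 * (q : ℝ) - 1) / ((D : ℝ) + 2 * q - 2) then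
        (1 - t) * (t * ((D : ℝ) + 2 * q - 2) - 1) /
          (2 * t * (D : ℝ) * (q : ℝ) - t ^ 2 * (D : ℝ) * ((D : ℝ) + 2 * q - 2) - 1)
      else 1) :
    (∀ t ∈ Set.Icc (0 : ℝ) 1, lstar t ∈ Set.Icc (0 : ℝ) 1) ∧
    MonotoneOn lstar (Set.Icc (0 : ℝ) 1) ∧
    StrictMonoOn lstar
      (Set.Ioo (1 / ((D : ℝ) + 2 * q - 2)) ((2 * (q : ℝ) - 1) / ((D : ℝ) + 2 * q - 2))) := by
  obtain ⟨E, hEd⟩ : ∃ E : ℝ, E = (D : ℝ) - 1 := ⟨_, rfl⟩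
  obtain ⟨m, hmd⟩ : ∃ m : ℝ, m = 2 * (q : ℝ) - 2 := ⟨_, rfl⟩
  have hE : 0 < E := by
    have : (2 : ℝ) ≤ D := by exact_mod_cast hD
    linarith
  have hm : 0 ≤ m := by
    have : (1 : ℝ) ≤ q := by exact_mod_cast hq
    linarith
  have hD' : (D : ℝ) = E + 1 := by linarith
  have hq' : (q : ℝ) = (m + 2) / 2 := by linarith
  have hS : (D : ℝ) + 2 * q - 2 = E + m + 1 := by linarith
  have hR : 2 * (q : ℝ) - 1 = m + 1 := by linarith
  have hS0 : 0 < E + m + 1 := by linarith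
  simp only [hS, hR] at h ⊢
  have hlo : ∀ t, t ≤ 1 / (E + m + 1) ↔ t * (E + m + 1) - 1 ≤ 0 := by
    intro t
    rw [le_div_iff₀ hS0, sub_nonpos]
  have hhi : ∀ t, t < (m + 1) / (E + m + 1) ↔ t * (E + m + 1) - 1 < m := by
    intro t
    rw [lt_div_iff₀ hS0, sub_lt_iff_lt_add]
  have low : ∀ t, t * (E + m + 1) - 1 ≤ 0 → lstar t = 0 := by
    intro t ht
    rw [h, if_pos ((hlo t).2 ht)]
  have high : ∀ t, 0 < t * (E + m + 1) - 1 → m ≤ t * (E + m + 1) - 1 → lstar t = 1 := by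
    intro t ht ht2
    rw [h, if_neg (by rw [hlo]; exact not_le.2 ht), if_neg (by rw [hhi]; exact not_lt.2 ht2)]
  have mid : ∀ t w, w = t * (E + m + 1) - 1 → 0 < w → w < m →
      lstar t = (E + m - w) * w / ((E + 1) * (w * (m - w)) + E * m) := by
    intro t w hw h0 h1
    have hden := aux_den hE h0 h1
    have e : (2 * t * (D : ℝ) * (q : ℝ) - t ^ 2 * (D : ℝ) * (E + m + 1) - 1) * (E + m + 1)
        = (E + 1) * (w * (m - w)) + E * m := by
      rw [hw, hD', hq']; ring
    have e2 : (1 - t) * (t * (E + m + 1) - 1) * (E + m + 1) = (E + m - w) * w := by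
      rw [hw]; ring
    rw [h, if_neg (by rw [hlo, ← hw]; exact not_le.2 h0), if_pos (by rw [hhi, ← hw]; exact h1),
      ← e, ← e2, mul_div_mul_right _ _ hS0.ne']
  have range : ∀ t, lstar t ∈ Set.Icc (0 : ℝ) 1 := by
    intro t
    rcases le_or_gt (t * (E + m + 1) - 1) 0 with h0 | h0
    · rw [low t h0]; simp
    rcases le_or_gt m (t * (E + m + 1) - 1) with h1 | h1
    · rw [high t h0 h1]; simp
    rw [mid t _ rfl h0 h1]
    generalize t * (E + m + 1) - 1 = w at h0 h1
    have hden := aux_den hE h0 h1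
    have h2 : 0 < m - w := by linarith
    constructor
    · apply div_nonneg _ hden.le
      apply mul_nonneg _ h0.le
      linarith
    · rw [div_le_one hden]
      have : 0 < E * ((m - w) * (1 + w)) := by positivity
      nlinarith [this]
  have step : ∀ s t, s < t → s * (E + m + 1) - 1 < t * (E + m + 1) - 1 := by
    intro s t hst
    have := mul_lt_mul_of_pos_right hst hS0
    linarith
  refine ⟨fun t _ => range t, ?_, ?_⟩
  · intro s _ t _ hst
    rcases hst.eq_or_lt with rfl | hst
    · exact le_rfl
    have hw := step s t hst
    rcases le_or_gt (s * (E + m + 1) - 1) 0 with h0 | h0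
    · rw [low s h0]; exact (range t).1
    rcases le_or_gt m (t * (E + m + 1) - 1) with h1 | h1
    · rw [high t (h0.trans hw) h1]; exact (range s).2
    rw [mid s _ rfl h0 (hw.trans h1), mid t _ rfl (h0.trans hw) h1]
    exact (aux_lt hE h0 hw h1).le
  · intro s hs t ht hst
    have hw := step s t hst
    have h0 : 0 < s * (E + m + 1) - 1 := by
      rw [← not_le, ← hlo]; exact not_le.2 hs.1
    have h1 := (hhi t).1 ht.2
    rw [mid s _ rfl h0 (hw.trans h1), mid t _ rfl (h0.trans hw) h1]
    exact aux_lt hE h0 hw h1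
end

section
/- Fix an integer D ≥ 2 and a real t with 1/D < t ≤ 1. For each integer q ≥ 1 define λ*_q(t) = 0 if t ≤ 1/(D+2q−2); λ*_q(t) = (1−t)(t(D+2q−2) − 1) / (2tDq − t²D(D+2q−2) − 1) if 1/(D+2q−2) < t < (2q−1)/(D+2q−2); and λ*_q(t) = 1 if t ≥ (2q−1)/(D+2q−2). Then q ↦ λ*_q(t) is monotonically non-increasing: for all integers 1 ≤ q₁ ≤ q₂, λ*_{q₁}(t) ≥ λ*_{q₂}(t). -/
/-- For `D ≥ 2` and fixed `t` with `1/D < t ≤ 1`, the optimal biased-sampling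
coefficient `λ*_q(t)` of Eq. (12) is monotonically non-increasing in the number of
queries `q`. -/
theorem stmt9 (D : ℕ) (hD : 2 ≤ D) (t : ℝ) (ht1 : 1 / (D : ℝ) < t) (ht2 : t ≤ 1)
    (lstar : ℕ → ℝ)
    (h : ∀ q : ℕ, 1 ≤ q → lstar q =
      if t ≤ 1 / ((D : ℝ) + 2 * q - 2) then 0
      else if t < (2 * (q : ℝ) - 1) / ((D : ℝ) + 2 * q - 2) then
        (1 - t) * (t * ((D : ℝ) + 2 * q - 2) - 1) /
          (2 * t * (D : ℝ) * (q : ℝ) - t ^ 2 * (D : ℝ) * ((D : ℝ) + 2 * q - 2) - 1)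
      else 1) :
    ∀ q₁ q₂ : ℕ, 1 ≤ q₁ → q₁ ≤ q₂ → lstar q₂ ≤ lstar q₁ := by
  intro q₁ q₂ h1 h12
  have hDr : (2 : ℝ) ≤ D := by exact_mod_cast hD
  have hq1 : (1 : ℝ) ≤ q₁ := by exact_mod_cast h1
  have hq : (q₁ : ℝ) ≤ q₂ := by exact_mod_cast h12
  rw [h q₁ h1, h q₂ (h1.trans h12)]
  generalize (D : ℝ) = d at *
  generalize (q₁ : ℝ) = a at *
  generalize (q₂ : ℝ) = b at *
  have htd : 1 < t * d := by rwa [div_lt_iff₀ (by linarith)] at ht1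
  have ht0 : 0 < t := lt_trans (by positivity) ht1
  have key : ∀ x : ℝ, 1 ≤ x → ¬ t ≤ 1 / (d + 2 * x - 2) := by
    intro x hx
    rw [not_le, div_lt_iff₀ (by linarith)]
    nlinarith
  have den : ∀ x : ℝ, d - 1 < (d + 2 * x - 2) * (1 - t) →
      0 < 2 * t * d * x - t ^ 2 * d * (d + 2 * x - 2) - 1 := by
    intro x hx
    have := mul_lt_mul_of_pos_left hx (show 0 < t * d by linarith)
    nlinarith
  have mid : ∀ x : ℝ, 1 ≤ x → (t < (2 * x - 1) / (d + 2 * x - 2) ↔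
      d - 1 < (d + 2 * x - 2) * (1 - t)) := by
    intro x hx
    rw [lt_div_iff₀ (by linarith)]
    constructor <;> intro h <;> nlinarith
  rw [if_neg (key a hq1), if_neg (key b (hq1.trans hq))]
  simp only [mid a hq1, mid b (hq1.trans hq)]
  by_cases ha : d - 1 < (d + 2 * a - 2) * (1 - t)
  · have hb : d - 1 < (d + 2 * b - 2) * (1 - t) := by nlinarith
    rw [if_pos ha, if_pos hb, div_le_div_iff₀ (den b hb) (den a ha)]
    have : 0 ≤ 2 * (b - a) * (((1 - t) * t) * ((d - 1) * (t * d - 1))) := by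
      have h1 : 0 ≤ b - a := by linarith
      have h2 : 0 ≤ 1 - t := by linarith
      have h3 : 0 ≤ d - 1 := by linarith
      have h4 : 0 ≤ t * d - 1 := by linarith
      positivity
    linear_combination this
  · rw [if_neg ha]
    split_ifs with hb
    · rw [div_le_one (den b hb)]
      have : 0 ≤ t * ((d - 1) * ((d + 2 * b - 2) * (1 - t) - (d - 1))) :=
        mul_nonneg ht0.le (mul_nonneg (by linarith) (by linarith))
      linear_combination this
    · exact le_rfl
end

section
/- (Optimal μ, Eq. (15)) Let α, b ∈ [0,1] with α(1−b²) + (1−α²)b > 0, and define F : [0,1] → ℝ by F(μ) = (μα + (1−μ)b)² / (μ² + (1−μ)² + 2μ(1−μ)αb), whose denominator is positive on [0,1]. Let μ* = α(1−b²) / (α(1−b²) + (1−α²)b). Then μ* ∈ [0,1], F(μ*) ≥ F(μ) for every μ ∈ [0,1], and F(μ*) = (α² + b² − 2α²b²)/(1 − α²b²). -/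
/-- Optimal μ, Eq. (15): For `α, b ∈ [0,1]` with
`α(1−b²) + (1−α²)b > 0`, the function `F(μ) = (μα+(1−μ)b)²/(μ²+(1−μ)²+2μ(1−μ)αb)`
(whose denominator is positive on `[0,1]`) is maximized over `[0,1]` at
`μ* = α(1−b²)/(α(1−b²)+(1−α²)b) ∈ [0,1]`, with `F(μ*) = (α²+b²−2α²b²)/(1−α²b²)`. -/
theorem stmt15 (α b : ℝ) (hα : α ∈ Set.Icc (0 : ℝ) 1) (hb : b ∈ Set.Icc (0 : ℝ) 1)
    (hpos : 0 < α * (1 - b ^ 2) + (1 - α ^ 2) * b)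
    (F : ℝ → ℝ)
    (hF : ∀ μ : ℝ, F μ =
      (μ * α + (1 - μ) * b) ^ 2 / (μ ^ 2 + (1 - μ) ^ 2 + 2 * μ * (1 - μ) * α * b))
    (mustar : ℝ)
    (hm : mustar = α * (1 - b ^ 2) / (α * (1 - b ^ 2) + (1 - α ^ 2) * b)) :
    (∀ μ ∈ Set.Icc (0 : ℝ) 1, 0 < μ ^ 2 + (1 - μ) ^ 2 + 2 * μ * (1 - μ) * α * b) ∧
    mustar ∈ Set.Icc (0 : ℝ) 1 ∧
    (∀ μ ∈ Set.Icc (0 : ℝ) 1, F μ ≤ F mustar) ∧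
    F mustar = (α ^ 2 + b ^ 2 - 2 * α ^ 2 * b ^ 2) / (1 - α ^ 2 * b ^ 2) := by
  obtain ⟨ha0, ha1⟩ := hα
  obtain ⟨hb0, hb1⟩ := hb
  have hc0 : 0 ≤ α * b := mul_nonneg ha0 hb0
  have hc1 : α * b < 1 := by
    by_contra h
    push Not at h
    nlinarith [mul_nonneg (add_nonneg ha0 hb0) (sub_nonneg.2 h)]
  have hC : 0 < 1 - α ^ 2 * b ^ 2 := by nlinarith
  have hden : ∀ μ ∈ Set.Icc (0 : ℝ) 1,
      0 < μ ^ 2 + (1 - μ) ^ 2 + 2 * μ * (1 - μ) * α * b := by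
    rintro μ ⟨h0, h1⟩
    have h2 : 0 ≤ μ * (1 - μ) * (α * b) :=
      mul_nonneg (mul_nonneg h0 (sub_nonneg.2 h1)) hc0
    nlinarith [sq_nonneg (2 * μ - 1)]
  have hp : 0 ≤ α * (1 - b ^ 2) := mul_nonneg ha0 (by nlinarith)
  have hq : 0 ≤ (1 - α ^ 2) * b := mul_nonneg (by nlinarith) hb0
  have hmem : mustar ∈ Set.Icc (0 : ℝ) 1 := by
    rw [hm]
    exact ⟨div_nonneg hp hpos.le, (div_le_one hpos).2 (by linarith)⟩
  have hmm : mustar * (α * (1 - b ^ 2) + (1 - α ^ 2) * b) = α * (1 - b ^ 2) := by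
    rw [hm]
    exact div_mul_cancel₀ _ hpos.ne'
  have gap : ∀ μ : ℝ, (α ^ 2 + b ^ 2 - 2 * α ^ 2 * b ^ 2) *
      (μ ^ 2 + (1 - μ) ^ 2 + 2 * μ * (1 - μ) * α * b) -
      (μ * α + (1 - μ) * b) ^ 2 * (1 - α ^ 2 * b ^ 2) =
      (μ * (α * (1 - b ^ 2) + (1 - α ^ 2) * b) - α * (1 - b ^ 2)) ^ 2 := by
    intro μ
    ring
  have hval : F mustar = (α ^ 2 + b ^ 2 - 2 * α ^ 2 * b ^ 2) / (1 - α ^ 2 * b ^ 2) := by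
    rw [hF, div_eq_div_iff (hden _ hmem).ne' hC.ne']
    have := gap mustar
    rw [hmm, sub_self] at this
    linarith
  refine ⟨hden, hmem, ?_, hval⟩
  intro μ hμ
  rw [hval, hF, div_le_div_iff₀ (hden μ hμ) hC]
  have := gap μ
  have h2 := sq_nonneg (μ * (α * (1 - b ^ 2) + (1 - α ^ 2) * b) - α * (1 - b ^ 2))
  linarith
end

section
/- (Optimal λ with data-dependent prior, Eq. (22)) Fix integers d ≥ 1 and q ≥ 1 and reals α, A with 0 < α² ≤ 1 and A > 0. Define F : [0,1] → ℝ by F(λ) = (λα² + ((1−λ)/d)A²)² / ((1 − 1/q)(λ²α² + ((1−λ)/d)²A²) + (1/q)(λα² + ((1−λ)/d)A²)), whose denominator is positive on [0,1]. Define λ* = 0 if α² ≤ A²/(d+2q−2); λ* = A²(A² − α²(d+2q−2)) / (A⁴ + α⁴d² − 2A²α²(q + dq − 1)) if A²/(d+2q−2) < α² < A²(2q−1)/d; and λ* = 1 if α² ≥ A²(2q−1)/d. Then λ* ∈ [0,1] and F(λ*) ≥ F(λ) for every λ ∈ [0,1]. -/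
lemma den_pos_aux (a b d q l : ℝ) (ha : 0 < a) (hb : 0 < b) (hd : 1 ≤ d) (hq : 1 ≤ q)
    (h0 : 0 ≤ l) (h1 : l ≤ 1) :
    0 < (1 - 1 / q) * (l ^ 2 * a + ((1 - l) / d) ^ 2 * b)
      + (1 / q) * (l * a + (1 - l) / d * b) := by
  have hd0 : 0 < d := by linarith
  have hq0 : 0 < q := by linarith
  have h2 : 0 ≤ 1 - 1 / q := by
    have : 1 / q ≤ 1 := by rw [div_le_one hq0]; exact hq
    linarith
  have h3 : 0 ≤ (1 - l) / d := div_nonneg (by linarith) hd0.le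
  have h4 : 0 < l * a + (1 - l) / d * b := by
    rcases h0.eq_or_lt with h | h
    · subst h
      have : 0 < (1 - 0) / d * b := by positivity
      linarith
    · have := mul_pos h ha
      have := mul_nonneg h3 hb.le
      linarith
  have h5 : 0 < (1 / q) * (l * a + (1 - l) / d * b) := by positivity
  have h6 : 0 ≤ (1 - 1 / q) * (l ^ 2 * a + ((1 - l) / d) ^ 2 * b) :=
    mul_nonneg h2 (by positivity)
  linarith

lemma max_aux (a b d q l m : ℝ) (ha : 0 < a) (hb : 0 < b) (hd : 1 ≤ d) (hq : 1 ≤ q)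
    (h0 : 0 ≤ l) (h1 : l ≤ 1) (hm0 : 0 ≤ m) (hm1 : m ≤ 1)
    (h : 0 ≤ (l - m) * (2 * (q - 1) * a * b * (m - (1 - m) / d)
      + (b - d * a) * (m * a + (1 - m) / d * b))) :
    (l * a + (1 - l) / d * b) ^ 2 / ((1 - 1 / q) * (l ^ 2 * a + ((1 - l) / d) ^ 2 * b)
      + (1 / q) * (l * a + (1 - l) / d * b)) ≤
    (m * a + (1 - m) / d * b) ^ 2 / ((1 - 1 / q) * (m ^ 2 * a + ((1 - m) / d) ^ 2 * b)
      + (1 / q) * (m * a + (1 - m) / d * b)) := by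
  have hd0 : 0 < d := by linarith
  have hq0 : 0 < q := by linarith
  have h3 : 0 ≤ (1 - l) / d := div_nonneg (by linarith) hd0.le
  have h4 : 0 ≤ l * a + (1 - l) / d * b := by positivity
  rw [div_le_div_iff₀ (den_pos_aux a b d q l ha hb hd hq h0 h1)
    (den_pos_aux a b d q m ha hb hd hq hm0 hm1), ← sub_nonneg]
  have key : (m * a + (1 - m) / d * b) ^ 2 * ((1 - 1 / q) * (l ^ 2 * a + ((1 - l) / d) ^ 2 * b)
      + (1 / q) * (l * a + (1 - l) / d * b)) -
      (l * a + (1 - l) / d * b) ^ 2 * ((1 - 1 / q) * (m ^ 2 * a + ((1 - m) / d) ^ 2 * b)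
      + (1 / q) * (m * a + (1 - m) / d * b)) =
      (1 / q) * ((1 / d) * (l * a + (1 - l) / d * b) *
        ((l - m) * (2 * (q - 1) * a * b * (m - (1 - m) / d)
      + (b - d * a) * (m * a + (1 - m) / d * b))) + (q - 1) * (a * b * (a + b) * ((l - m) / d) ^ 2)) := by
    field_simp
    ring
  rw [key]
  have : 0 ≤ q - 1 := by linarith
  positivity

/-- Optimal λ with data-dependent prior, Eq. (22): For `d ≥ 1`, `q ≥ 1`,
`0 < α² ≤ 1` and `A > 0`, the function `F(λ)` (whose denominator is positive on `[0,1]`)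
is maximized over `[0,1]` at the piecewise value `λ*` of Eq. (22), and `λ* ∈ [0,1]`. -/
theorem stmt16 (d q : ℕ) (hd : 1 ≤ d) (hq : 1 ≤ q) (α A : ℝ)
    (hα0 : 0 < α ^ 2) (hα1 : α ^ 2 ≤ 1) (hA : 0 < A)
    (F : ℝ → ℝ)
    (hF : ∀ l : ℝ, F l =
      (l * α ^ 2 + (1 - l) / (d : ℝ) * A ^ 2) ^ 2 /
        ((1 - 1 / (q : ℝ)) * (l ^ 2 * α ^ 2 + ((1 - l) / (d : ℝ)) ^ 2 * A ^ 2)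
          + (1 / (q : ℝ)) * (l * α ^ 2 + (1 - l) / (d : ℝ) * A ^ 2)))
    (lstar : ℝ)
    (hls : lstar =
      if α ^ 2 ≤ A ^ 2 / ((d : ℝ) + 2 * q - 2) then 0
      else if α ^ 2 < A ^ 2 * (2 * (q : ℝ) - 1) / (d : ℝ) then
        A ^ 2 * (A ^ 2 - α ^ 2 * ((d : ℝ) + 2 * q - 2)) /
          (A ^ 4 + α ^ 4 * (d : ℝ) ^ 2 - 2 * A ^ 2 * α ^ 2 * ((q : ℝ) + d * q - 1))
      else 1) :
    (∀ l ∈ Set.Icc (0 : ℝ) 1,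
      0 < (1 - 1 / (q : ℝ)) * (l ^ 2 * α ^ 2 + ((1 - l) / (d : ℝ)) ^ 2 * A ^ 2)
          + (1 / (q : ℝ)) * (l * α ^ 2 + (1 - l) / (d : ℝ) * A ^ 2)) ∧
    lstar ∈ Set.Icc (0 : ℝ) 1 ∧
    ∀ l ∈ Set.Icc (0 : ℝ) 1, F l ≤ F lstar := by
  have hd' : (1 : ℝ) ≤ d := by exact_mod_cast hd
  have hq' : (1 : ℝ) ≤ q := by exact_mod_cast hq
  have e4 : A ^ 4 = (A ^ 2) ^ 2 := by ring
  have e4' : α ^ 4 = (α ^ 2) ^ 2 := by ring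
  rw [e4, e4'] at hls
  have hb : 0 < A ^ 2 := by positivity
  generalize A ^ 2 = b at *
  generalize α ^ 2 = a at *
  generalize (d : ℝ) = d at *
  generalize (q : ℝ) = q at *
  have hd0 : 0 < d := by linarith
  have hk : 0 < d + 2 * q - 2 := by linarith
  refine ⟨fun l hl => den_pos_aux a b d q l hα0 hb hd' hq' hl.1 hl.2, ?_⟩
  suffices H : lstar ∈ Set.Icc (0 : ℝ) 1 ∧ ∀ l ∈ Set.Icc (0 : ℝ) 1,
      0 ≤ (l - lstar) * (2 * (q - 1) * a * b * (lstar - (1 - lstar) / d)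
      + (b - d * a) * (lstar * a + (1 - lstar) / d * b)) by
    refine ⟨H.1, fun l hl => ?_⟩
    rw [hF, hF]
    exact max_aux a b d q l lstar hα0 hb hd' hq' hl.1 hl.2 H.1.1 H.1.2 (H.2 l hl)
  split_ifs at hls with c1 c2
  · subst hls
    rw [le_div_iff₀ hk] at c1
    refine ⟨by simp, fun l hl => ?_⟩
    have e : (l - 0) * (2 * (q - 1) * a * b * (0 - (1 - 0) / d)
      + (b - d * a) * (0 * a + (1 - 0) / d * b)) = l * (b / d * (b - a * (d + 2 * q - 2))) := by
      field_simp
      ring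
    rw [e]
    exact mul_nonneg hl.1 (mul_nonneg (by positivity) (by linarith))
  · rw [not_le, div_lt_iff₀ hk] at c1
    rw [lt_div_iff₀ hd0] at c2
    have hX : 0 < b * (a * (d + 2 * q - 2) - b) := mul_pos hb (by linarith)
    have hY : 0 < a * (b * (2 * q - 1) - a * d) := mul_pos hα0 (by linarith)
    have hdY := mul_pos hd0 hY
    have hS : b * (a * (d + 2 * q - 2) - b) + d * (a * (b * (2 * q - 1) - a * d))
        = -(b ^ 2 + a ^ 2 * d ^ 2 - 2 * b * a * (q + d * q - 1)) := by ring
    have hl' : lstar = b * (a * (d + 2 * q - 2) - b) /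
        (b * (a * (d + 2 * q - 2) - b) + d * (a * (b * (2 * q - 1) - a * d))) := by
      rw [hS, hls, div_neg, ← neg_div]
      congr 1
      ring
    have hSp := add_pos hX hdY
    have hy : (1 - lstar) / d = a * (b * (2 * q - 1) - a * d) /
        (b * (a * (d + 2 * q - 2) - b) + d * (a * (b * (2 * q - 1) - a * d))) := by
      rw [hl', one_sub_div hSp.ne', add_sub_cancel_left, div_right_comm,
        mul_div_cancel_left₀ _ hd0.ne']
    refine ⟨⟨?_, ?_⟩, fun l hl => ?_⟩
    · rw [hl']; positivity
    · rw [hl', div_le_one hSp]; linarith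
    · rw [hy, hl']
      refine le_of_eq ?_
      symm
      apply mul_eq_zero_of_right
      generalize b * (a * (d + 2 * q - 2) - b) + d * (a * (b * (2 * q - 1) - a * d)) = S at *
      ring
  · rw [not_lt, div_le_iff₀ hd0] at c2
    subst hls
    refine ⟨by simp, fun l hl => ?_⟩
    have e : (l - 1) * (2 * (q - 1) * a * b * (1 - (1 - 1) / d)
      + (b - d * a) * (1 * a + (1 - 1) / d * b)) = (1 - l) * (a * (a * d - b * (2 * q - 1))) := by
      rw [sub_self, zero_div]
      ring
    rw [e]
    exact mul_nonneg (by linarith [hl.2]) (mul_nonneg hα0.le (by linarith))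
end

section
/- (Optimal μ with data-dependent prior, Eq. (26)) Let A > 0, α ≥ 0, b ≥ 0, and α₁ ∈ ℝ satisfy |α₁|·b < A² and α + b > 0, and define F : [0,1] → ℝ by F(μ) = (μα + (1−μ)b)² / (μ² + (1−μ)² + 2μ(1−μ)(α₁/A²)b), whose denominator is positive on [0,1]. Let μ* = (A²α − α₁b²) / ((A² − α₁b)(α + b)) (well-defined since A² − α₁b > 0), and assume μ* ∈ [0,1]. Then F(μ*) ≥ F(μ) for every μ ∈ [0,1], and F(μ*) = (A⁴(α² + b²) − 2A²α·α₁·b²) / (A⁴ − α₁²b²). -/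
/-- Optimal μ with data-dependent prior, Eq. (26): For `A > 0`, `α ≥ 0`,
`b ≥ 0`, `α₁ ∈ ℝ` with `|α₁|·b < A²` and `α + b > 0`, the function
`F(μ) = (μα+(1−μ)b)²/(μ²+(1−μ)²+2μ(1−μ)(α₁/A²)b)` (whose denominator is positive on
`[0,1]`) is maximized over `[0,1]` at `μ* = (A²α−α₁b²)/((A²−α₁b)(α+b))`
(well-defined since `A²−α₁b > 0`), assumed to lie in `[0,1]`, with
`F(μ*) = (A⁴(α²+b²)−2A²α·α₁·b²)/(A⁴−α₁²b²)`. -/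
theorem stmt18 (A α b α₁ : ℝ) (hA : 0 < A) (hα : 0 ≤ α) (hb : 0 ≤ b)
    (h1 : |α₁| * b < A ^ 2) (h2 : 0 < α + b)
    (F : ℝ → ℝ)
    (hF : ∀ μ : ℝ, F μ =
      (μ * α + (1 - μ) * b) ^ 2 /
        (μ ^ 2 + (1 - μ) ^ 2 + 2 * μ * (1 - μ) * (α₁ / A ^ 2) * b))
    (mustar : ℝ)
    (hm : mustar = (A ^ 2 * α - α₁ * b ^ 2) / ((A ^ 2 - α₁ * b) * (α + b)))
    (hms : mustar ∈ Set.Icc (0 : ℝ) 1) :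
    (∀ μ ∈ Set.Icc (0 : ℝ) 1,
      0 < μ ^ 2 + (1 - μ) ^ 2 + 2 * μ * (1 - μ) * (α₁ / A ^ 2) * b) ∧
    0 < A ^ 2 - α₁ * b ∧
    (∀ μ ∈ Set.Icc (0 : ℝ) 1, F μ ≤ F mustar) ∧
    F mustar = (A ^ 4 * (α ^ 2 + b ^ 2) - 2 * A ^ 2 * α * α₁ * b ^ 2) /
      (A ^ 4 - α₁ ^ 2 * b ^ 2) := by
  have hA2 : 0 < A ^ 2 := by positivity
  obtain ⟨c, hc⟩ : ∃ c, c = α₁ * b / A ^ 2 := ⟨_, rfl⟩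
  have hcA : α₁ * b = c * A ^ 2 := by rw [hc]; field_simp
  have habs : |α₁ * b| < A ^ 2 := by rwa [abs_mul, abs_of_nonneg hb]
  obtain ⟨hl, hr⟩ := abs_lt.mp habs
  rw [hcA] at hl hr
  have hc1 : c < 1 := by nlinarith
  have hc2 : -1 < c := by nlinarith
  have hD : ∀ μ : ℝ, μ ^ 2 + (1 - μ) ^ 2 + 2 * μ * (1 - μ) * (α₁ / A ^ 2) * b
      = μ ^ 2 + (1 - μ) ^ 2 + 2 * c * μ * (1 - μ) := by
    intro μ; rw [hc]; ring
  have hpos : ∀ μ : ℝ, 0 < μ ^ 2 + (1 - μ) ^ 2 + 2 * c * μ * (1 - μ) := by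
    intro μ
    have e : μ ^ 2 + (1 - μ) ^ 2 + 2 * c * μ * (1 - μ)
      = (1 + c) / 2 + (1 - c) / 2 * (2 * μ - 1) ^ 2 := by ring
    rw [e]
    have : 0 < 1 + c := by linarith
    have : 0 < 1 - c := by linarith
    positivity
  have h1c : 0 < 1 - c := by linarith
  have hcc : 0 < 1 - c ^ 2 := by nlinarith
  have hN : 0 < α ^ 2 + b ^ 2 - 2 * c * α * b := by
    have e : α ^ 2 + b ^ 2 - 2 * c * α * b
      = (1 - c) / 2 * (α + b) ^ 2 + (1 + c) / 2 * (α - b) ^ 2 := by ring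
    rw [e]
    have : 0 < 1 + c := by linarith
    positivity
  have hm' : mustar * ((1 - c) * (α + b)) = α - c * b := by
    have e1 : A ^ 2 * α - α₁ * b ^ 2 = A ^ 2 * (α - c * b) := by
      linear_combination (-b) * hcA
    have e2 : A ^ 2 - α₁ * b = A ^ 2 * (1 - c) := by
      linear_combination -hcA
    rw [hm, e1, e2]; field_simp
  have hFs : F mustar = (α ^ 2 + b ^ 2 - 2 * c * α * b) / (1 - c ^ 2) := by
    have hm2 : mustar = (α - c * b) / ((1 - c) * (α + b)) := by
      rw [← hm']; field_simp
    have hn2 : 1 - mustar = (b - c * α) / ((1 - c) * (α + b)) := by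
      rw [hm2]; field_simp; ring
    rw [hF, hD, div_eq_div_iff (hpos _).ne' hcc.ne', hn2, hm2]
    field_simp
    ring
  refine ⟨fun μ _ => by rw [hD]; exact hpos μ, by rw [hcA]; linarith, ?_, ?_⟩
  · intro μ _
    rw [hFs, hF, hD, div_le_div_iff₀ (hpos μ) hcc]
    nlinarith [sq_nonneg (μ * (b - c * α) - (1 - μ) * (α - c * b))]
  · have e1 : A ^ 4 * (α ^ 2 + b ^ 2) - 2 * A ^ 2 * α * α₁ * b ^ 2
        = A ^ 4 * (α ^ 2 + b ^ 2 - 2 * c * α * b) := by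
      linear_combination (-2 * A ^ 2 * α * b) * hcA
    have e2 : A ^ 4 - α₁ ^ 2 * b ^ 2 = A ^ 4 * (1 - c ^ 2) := by
      linear_combination (-(α₁ * b + c * A ^ 2)) * hcA
    rw [hFs, e1, e2, mul_div_mul_left _ _ (by positivity)]
end
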